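/- arXiv:2005.12098 — 3 statements merged into one kernel-verified Lean document; each statement's English description precedes it below -/
import Mathlib

section
/- Let (Ω, F, P) be a probability space, Z an integrable real random variable, s ≥ 0 and w ∈ ℝ, and let z̄ ∈ ℝ be the unique real number with E[h(s, Z − E[Z] + z̄)] = w. Then (z̄ − E[Z])⁺ = inf{ x ≥ 0 : E[h(s, Z + x)] ≥ w }, where a⁺ = max(a, 0). -/
open MeasureTheory Filter Set Function Topology

noncomputable section

/-- A function with values in a topological space is càdlàg on `[0,∞)`:
right-continuous at every `t ≥ 0` and admitting a left limit at every `t > 0`. -/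
def CadlagOn {E : Type*} [TopologicalSpace E] (f : ℝ → E) : Prop :=
  (∀ t : ℝ, 0 ≤ t → ContinuousWithinAt f (Set.Ici t) t) ∧
  ∀ t : ℝ, 0 < t → ∃ L : E, Filter.Tendsto f (nhdsWithin t (Set.Iio t)) (nhds L)

/-- Condition (H) on `h : [0,∞) × ℝ → ℝ` with constants `Mh, Lh, ch, Ch`. -/
structure CondH (h : ℝ → ℝ → ℝ) (Mh Lh ch Ch : ℝ) : Prop where
  meas : Measurable (Function.uncurry h)
  Mh_pos : 0 < Mh
  Lh_pos : 0 < Lh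
  ch_pos : 0 < ch
  Ch_pos : 0 < Ch
  growth : ∀ t x : ℝ, 0 ≤ t → |h t x| ≤ Mh * (1 + |x|)
  strict_mono : ∀ t : ℝ, 0 ≤ t → StrictMono (h t)
  lip_time : ∀ s t x : ℝ, 0 ≤ s → 0 ≤ t → |h t x - h s x| ≤ Lh * |t - s|
  lip_lower : ∀ t x y : ℝ, 0 ≤ t → ch * |x - y| ≤ |h t x - h t y|
  lip_upper : ∀ t x y : ℝ, 0 ≤ t → |h t x - h t y| ≤ Ch * |x - y|

/-- A process with càdlàg paths, integrable values, and values uniformly integrable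
on every compact time interval. -/
structure NiceProcess {Ω : Type*} [MeasurableSpace Ω] (μ : Measure Ω) (Y : ℝ → Ω → ℝ) : Prop where
  cadlag : ∀ ω, CadlagOn fun t => Y t ω
  integrable : ∀ t : ℝ, 0 ≤ t → Integrable (Y t) μ
  unifInt : ∀ q : ℝ, 0 ≤ q → UniformIntegrable (fun t : Set.Icc (0:ℝ) q => Y t.1) 1 μ

/-- Solution of the Skorokhod problem with mean minimality condition and two constraints
associated with `(h, Y, l, u)`. -/
def MeanSP {Ω : Type*} [MeasurableSpace Ω] (μ : Measure Ω) (h : ℝ → ℝ → ℝ)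
    (Y : ℝ → Ω → ℝ) (l u : ℝ → ℝ) (X : ℝ → Ω → ℝ) (k : ℝ → ℝ) : Prop :=
  (∀ ω, CadlagOn fun t => X t ω) ∧ CadlagOn k ∧ k 0 = 0 ∧
  (∀ t : ℝ, 0 ≤ t → ∀ ω, X t ω = Y t ω + k t) ∧
  (∀ t : ℝ, 0 ≤ t → (∫ ω, h t (X t ω) ∂μ) ∈ Set.Icc (l t) (u t)) ∧
  (∀ t q : ℝ, 0 ≤ t → t ≤ q →
    ((∀ s : ℝ, t < s → s ≤ q → (∫ ω, h s (X s ω) ∂μ) < u s) → 0 ≤ k q - k t) ∧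
    ((∀ s : ℝ, t < s → s ≤ q → l s < ∫ ω, h s (X s ω) ∂μ) → k q - k t ≤ 0)) ∧
  ∀ t : ℝ, 0 < t →
    ((∫ ω, h t (X t ω) ∂μ) < u t → 0 ≤ k t - Function.leftLim k t) ∧
    (l t < ∫ ω, h t (X t ω) ∂μ → k t - Function.leftLim k t ≤ 0)

/-- Solution of the deterministic Skorokhod problem with two time-dependent barriers. -/
def DetSP (y lb ub x k : ℝ → ℝ) : Prop :=
  CadlagOn x ∧ CadlagOn k ∧ k 0 = 0 ∧
  (∀ t : ℝ, 0 ≤ t → x t = y t + k t ∧ x t ∈ Set.Icc (lb t) (ub t)) ∧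
  (∀ t q : ℝ, 0 ≤ t → t ≤ q →
    ((∀ s : ℝ, t < s → s ≤ q → x s < ub s) → 0 ≤ k q - k t) ∧
    ((∀ s : ℝ, t < s → s ≤ q → lb s < x s) → k q - k t ≤ 0)) ∧
  ∀ t : ℝ, 0 < t →
    (x t < ub t → 0 ≤ k t - Function.leftLim k t) ∧
    (lb t < x t → k t - Function.leftLim k t ≤ 0)

/-- Solution of the Skorokhod problem with mean minimality condition and a single
lower barrier `l`.  The minimality condition `∫ (E[h(s,X_s)] - l_s) dk_s = 0` is expressed
through any measure `ν` that agrees with the Lebesgue–Stieltjes measure of `k` on `[0,∞)`. -/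
def MeanSPLower {Ω : Type*} [MeasurableSpace Ω] (μ : Measure Ω) (h : ℝ → ℝ → ℝ)
    (Y : ℝ → Ω → ℝ) (l : ℝ → ℝ) (X : ℝ → Ω → ℝ) (k : ℝ → ℝ) : Prop :=
  (∀ ω, CadlagOn fun t => X t ω) ∧ CadlagOn k ∧ k 0 = 0 ∧
  (∀ t : ℝ, 0 ≤ t → ∀ ω, X t ω = Y t ω + k t) ∧
  (∀ t : ℝ, 0 ≤ t → l t ≤ ∫ ω, h t (X t ω) ∂μ) ∧
  MonotoneOn k (Set.Ici 0) ∧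
  ∀ ν : Measure ℝ,
    (∀ a b : ℝ, 0 ≤ a → a ≤ b → ν (Set.Ioc a b) = ENNReal.ofReal (k b - k a)) →
    ν {0} = 0 →
    ∀ t : ℝ, 0 ≤ t → (∫ s in Set.Icc 0 t, ((∫ ω, h s (X s ω) ∂μ) - l s) ∂ν) = 0

/-- Solution of the Skorokhod problem with mean minimality condition and a single
upper barrier `u`.  The minimality condition `∫ (u_s - E[h(s,X_s)]) d(-k)_s = 0` is expressed
through any measure `ν` that agrees with the Lebesgue–Stieltjes measure of `-k` on `[0,∞)`. -/
def MeanSPUpper {Ω : Type*} [MeasurableSpace Ω] (μ : Measure Ω) (h : ℝ → ℝ → ℝ)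
    (Y : ℝ → Ω → ℝ) (u : ℝ → ℝ) (X : ℝ → Ω → ℝ) (k : ℝ → ℝ) : Prop :=
  (∀ ω, CadlagOn fun t => X t ω) ∧ CadlagOn k ∧ k 0 = 0 ∧
  (∀ t : ℝ, 0 ≤ t → ∀ ω, X t ω = Y t ω + k t) ∧
  (∀ t : ℝ, 0 ≤ t → (∫ ω, h t (X t ω) ∂μ) ≤ u t) ∧
  AntitoneOn k (Set.Ici 0) ∧
  ∀ ν : Measure ℝ,
    (∀ a b : ℝ, 0 ≤ a → a ≤ b → ν (Set.Ioc a b) = ENNReal.ofReal (k a - k b)) →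
    ν {0} = 0 →
    ∀ t : ℝ, 0 ≤ t → (∫ s in Set.Icc 0 t, (u s - ∫ ω, h s (X s ω) ∂μ) ∂ν) = 0

/-- `OscN x η q` is the number of `η`-oscillations of `x` on `[0,q]`: the largest `m`
for which there are `0 ≤ t₁ ≤ t₂ ≤ ⋯ ≤ t_{2m} ≤ q` with `|x(t_{2i}) - x(t_{2i-1})| > η`. -/
def OscN (x : ℝ → ℝ) (η q : ℝ) : ℕ :=
  sSup {m : ℕ | ∃ a b : Fin m → ℝ,
    (∀ i, 0 ≤ a i ∧ a i ≤ b i ∧ b i ≤ q) ∧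
    (∀ i j, i < j → b i ≤ a j) ∧
    ∀ i, η < |x (b i) - x (a i)|}

/-- The left limit at `t` of a càdlàg function on `[0,∞)`, with the convention
`x(0-) = x(0)`. -/
def leftLimAt {E : Type*} [TopologicalSpace E] (x : ℝ → E) (t : ℝ) : E :=
  if t = 0 then x 0 else Function.leftLim x t

/-- Convergence `xₙ → x` in the Skorokhod `J₁` topology on `D([0,∞), E)`, expressed via
the sequence characterization used in the paper. -/
def DConvOn {E : Type*} [TopologicalSpace E] (xs : ℕ → ℝ → E) (x : ℝ → E) : Prop :=
  ∀ t : ℝ, 0 ≤ t → ∃ tn : ℕ → ℝ,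
    (∀ n, 0 ≤ tn n) ∧ Filter.Tendsto tn Filter.atTop (nhds t) ∧
    ∀ t' t'' : ℕ → ℝ, (∀ n, 0 ≤ t' n) → (∀ n, 0 ≤ t'' n) →
      Filter.Tendsto t' Filter.atTop (nhds t) → Filter.Tendsto t'' Filter.atTop (nhds t) →
      (∀ n, t' n < tn n ∧ tn n ≤ t'' n) →
      Filter.Tendsto (fun n => xs n (t' n)) Filter.atTop (nhds (leftLimAt x t)) ∧
      Filter.Tendsto (fun n => xs n (t'' n)) Filter.atTop (nhds (x t))

theorem integral_lt_integral_of_ae_lt {Ω : Type*} [MeasurableSpace Ω] {μ : Measure Ω} [NeZero μ]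
    {f g : Ω → ℝ} (hf : Integrable f μ) (hg : Integrable g μ) (hfg : ∀ᵐ ω ∂μ, f ω < g ω) :
    ∫ ω, f ω ∂μ < ∫ ω, g ω ∂μ := by
  have hfg_le : f ≤ᵐ[μ] g := hfg.mono fun _ hω => hω.le
  refine (integral_mono_ae hf hg hfg_le).lt_of_ne fun h_eq => ?_
  have h_ae_eq : f =ᵐ[μ] g := (integral_eq_iff_of_ae_le hf hg hfg_le).1 h_eq
  obtain ⟨ω, hlt, heq⟩ := (hfg.and h_ae_eq).exists
  exact hlt.ne heq

theorem strictMono_integral_comp_add {Ω E : Type*} [MeasurableSpace Ω] {μ : Measure Ω} [NeZero μ]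
    [Preorder E] [Add E] [AddLeftStrictMono E] {g : E → ℝ} (hg : StrictMono g) {Z : Ω → E}
    (hgZ : ∀ x, Integrable (fun ω => g (Z ω + x)) μ) :
    StrictMono fun x => ∫ ω, g (Z ω + x) ∂μ := fun x y hxy =>
  integral_lt_integral_of_ae_lt (hgZ x) (hgZ y) <|
    ae_of_all μ fun ω => hg (add_lt_add_right hxy (Z ω))

theorem integrable_comp_of_norm_le_mul_one_add_norm {Ω E F : Type*} [MeasurableSpace Ω]
    {μ : Measure Ω} [IsFiniteMeasure μ] [NormedAddCommGroup E] [NormedAddCommGroup F]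
    {g : E → F} {C : ℝ} (hg : ∀ x, ‖g x‖ ≤ C * (1 + ‖x‖)) {Z : Ω → E} (hZ : Integrable Z μ)
    (hgZ : AEStronglyMeasurable (fun ω => g (Z ω)) μ) : Integrable (fun ω => g (Z ω)) μ :=
  (((integrable_const 1).add hZ.norm).const_mul C).mono' hgZ <| ae_of_all μ fun ω => hg (Z ω)

theorem CondH.integrable_comp {Ω : Type*} [MeasurableSpace Ω] {μ : Measure Ω} [IsFiniteMeasure μ]
    {h : ℝ → ℝ → ℝ} {Mh Lh ch Ch : ℝ} (hH : CondH h Mh Lh ch Ch) {s : ℝ} (hs : 0 ≤ s)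
    {Z : Ω → ℝ} (hZ : Integrable Z μ) : Integrable (fun ω => h s (Z ω)) μ :=
  have h_meas : Measurable (h s) := (hH.strict_mono s hs).monotone.measurable
  integrable_comp_of_norm_le_mul_one_add_norm (fun x => hH.growth s x hs) hZ
    (h_meas.comp_aemeasurable hZ.aemeasurable).aestronglyMeasurable

theorem setOf_le_and_apply_le_apply_eq_Ici {α β : Type*} [LinearOrder α] [Preorder β] {F : α → β}
    (hF : StrictMono F) (a b : α) : {x | b ≤ x ∧ F a ≤ F x} = Ici (max a b) := by
  ext x
  simp only [mem_ofPred_eq, mem_Ici, hF.le_iff_le, max_le_iff, and_comm]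

theorem stmt_14_general {Ω : Type*} [MeasurableSpace Ω] {μ : Measure Ω} [NeZero μ]
    {g : ℝ → ℝ} (hg : StrictMono g) {Z : Ω → ℝ}
    (hgZ : ∀ x, Integrable (fun ω => g (Z ω + x)) μ) {m zbar w : ℝ}
    (hzbar : ∫ ω, g (Z ω - m + zbar) ∂μ = w) :
    max (zbar - m) 0 = sInf {x : ℝ | 0 ≤ x ∧ w ≤ ∫ ω, g (Z ω + x) ∂μ} := by
  have hw : w = ∫ ω, g (Z ω + (zbar - m)) ∂μ := by
    simp only [← hzbar, sub_add_eq_add_sub, add_sub_assoc]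
  rw [hw, setOf_le_and_apply_le_apply_eq_Ici (strictMono_integral_comp_add hg hgZ), csInf_Ici]

/-- `(z̄ - E Z)⁺ = inf{ x ≥ 0 : E[h(s, Z + x)] ≥ w }`. -/
theorem stmt_14 {Ω : Type*} [MeasurableSpace Ω] (μ : Measure Ω) [IsProbabilityMeasure μ]
    (h : ℝ → ℝ → ℝ) (Mh Lh ch Ch : ℝ) (hH : CondH h Mh Lh ch Ch)
    (Z : Ω → ℝ) (hZ : Integrable Z μ) (s : ℝ) (hs : 0 ≤ s) (w : ℝ) (zbar : ℝ)
    (hzbar : (∫ ω, h s (Z ω - (∫ ω', Z ω' ∂μ) + zbar) ∂μ) = w) :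
    max (zbar - ∫ ω, Z ω ∂μ) 0 =
      sInf {x : ℝ | 0 ≤ x ∧ w ≤ ∫ ω, h s (Z ω + x) ∂μ} := by
  exact stmt_14_general (hH.strict_mono s hs)
    (fun x => hH.integrable_comp hs (hZ.add (integrable_const x))) hzbar
end
end

section
/- Let (X, k) be the unique solution of the Skorokhod problem with mean minimality condition and two constraints associated with (h, Y, l, u). For each n ≥ 1 define the grid values k^n_{j/n} recursively by k^n_0 = 0 and k^n_{(j+1)/n} = max( min( k^n_{j/n}, ū_{(j+1)/n} − E[Y_{(j+1)/n}] ), l̄_{(j+1)/n} − E[Y_{(j+1)/n}] ) for j ≥ 0, and set X^n_{j/n} = Y_{j/n} + k^n_{j/n}. Then for every q ≥ 0, max_{j : j/n ≤ q} |k^n_{j/n} − k_{j/n}| → 0 as n → ∞; consequently max_{j : j/n ≤ q} ( |X^n_{j/n} − X_{j/n}| + |k^n_{j/n} − k_{j/n}| ) → 0 almost surely. -/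
open MeasureTheory Filter Set Function Topology

noncomputable section

/-!
Subtracting the mean of `Y` turns the problem into a deterministic one: `k` has to stay between two
barriers that are càdlàg because `t ↦ Y t` is càdlàg in `L¹`, and it moves up only at the lower one
and down only at the upper one. Hence `k` cannot fall from above a level to below it while the upper
barrier stays above this level. It follows that, over a time interval on which the barriers
oscillate by at most `ε`, one projection step started at any point either does not increase its
distance to `k` or brings it below `ε`. Errors therefore do not accumulate while the barriers
oscillate little, and they accumulate arbitrarily little when a large barrier jump is crossed,
because the same estimate holds with the left limit of `k` as starting value. Finitely many
intervals of small oscillation cover a bounded time range.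
-/

namespace CadlagOn

variable {E F : Type*}

theorem continuous_comp [TopologicalSpace E] [TopologicalSpace F] {φ : E → F} {f : ℝ → E}
    (hφ : Continuous φ) (hf : CadlagOn f) : CadlagOn fun t => φ (f t) :=
  ⟨fun t ht => hφ.continuousAt.comp_continuousWithinAt (hf.1 t ht), fun t ht =>
    let ⟨L, hL⟩ := hf.2 t ht
    ⟨φ L, (hφ.tendsto L).comp hL⟩⟩

theorem of_continuous [TopologicalSpace E] {f : ℝ → E} (hf : Continuous f) : CadlagOn f :=
  ⟨fun _ _ => hf.continuousWithinAt, fun t _ => ⟨f t, hf.continuousWithinAt⟩⟩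

theorem prodMk [TopologicalSpace E] [TopologicalSpace F] {f : ℝ → E} {g : ℝ → F}
    (hf : CadlagOn f) (hg : CadlagOn g) : CadlagOn fun t => (f t, g t) :=
  ⟨fun t ht => (hf.1 t ht).prodMk (hg.1 t ht), fun t ht =>
    let ⟨L, hL⟩ := hf.2 t ht
    let ⟨M, hM⟩ := hg.2 t ht
    ⟨(L, M), hL.prodMk_nhds hM⟩⟩

theorem tendsto_leftLim [TopologicalSpace E] {f : ℝ → E} (hf : CadlagOn f) {t : ℝ} (ht : 0 < t) :
    Tendsto f (𝓝[<] t) (𝓝 (leftLim f t)) :=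
  tendsto_leftLim_of_tendsto (hf.2 t ht)

theorem of_dist_le [PseudoMetricSpace E] [PseudoMetricSpace F] [CompleteSpace F] {f : ℝ → E}
    {g : ℝ → F} {C : ℝ} (hf : CadlagOn f)
    (hfg : ∀ s t, 0 ≤ s → 0 ≤ t → dist (g s) (g t) ≤ C * dist (f s) (f t)) : CadlagOn g := by
  refine ⟨fun t ht => ?_, fun t ht => ?_⟩
  · have hft := (tendsto_iff_dist_tendsto_zero.1 (hf.1 t ht).tendsto).const_mul C
    rw [mul_zero] at hft
    refine tendsto_iff_dist_tendsto_zero.2 (squeeze_zero' (.of_forall fun _ => dist_nonneg) ?_ hft)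
    filter_upwards [self_mem_nhdsWithin] with s hs
    exact hfg s t (ht.trans hs) ht
  · obtain ⟨L, hL⟩ := hf.2 t ht
    have hcauchy := (tendsto_uniformity_iff_dist_tendsto_zero.1
      (cauchy_map_iff'.1 hL.cauchy_map)).const_mul C
    rw [mul_zero] at hcauchy
    refine cauchy_map_iff_exists_tendsto.1 (cauchy_map_iff'.2
      (tendsto_uniformity_iff_dist_tendsto_zero.2
        (squeeze_zero' (.of_forall fun _ => dist_nonneg) ?_ hcauchy)))
    have hpos : ∀ᶠ s in 𝓝[<] t, 0 ≤ s := by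
      filter_upwards [Ioo_mem_nhdsLT ht] with s hs using hs.1.le
    filter_upwards [hpos.prod_mk hpos] with p hp using hfg p.1 p.2 hp.1 hp.2

section Oscillation

variable [PseudoMetricSpace E] {f : ℝ → E} {t ε : ℝ}

theorem exists_forall_Ioo_dist_le (hf : CadlagOn f) (ht : 0 < t) (hε : 0 < ε) :
    ∃ a < t, ∀ r ∈ Ioo a t, ∀ r' ∈ Ioo a t, dist (f r) (f r') ≤ ε := by
  obtain ⟨L, hL⟩ := hf.2 t ht
  obtain ⟨S, hS, hdist⟩ := (Metric.cauchy_iff.1 hL.cauchy_map).2 ε hε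
  obtain ⟨a, ha, hsub⟩ := mem_nhdsLT_iff_exists_Ioo_subset.1 (mem_map.1 hS)
  exact ⟨a, ha, fun r hr r' hr' => (hdist _ (hsub hr) _ (hsub hr')).le⟩

theorem exists_forall_Ico_dist_le (hf : CadlagOn f) (ht : 0 ≤ t) (hε : 0 < ε) :
    ∃ b > t, ∀ r ∈ Ico t b, ∀ r' ∈ Ico t b, dist (f r) (f r') ≤ ε := by
  obtain ⟨S, hS, hdist⟩ := (Metric.cauchy_iff.1 (hf.1 t ht).tendsto.cauchy_map).2 ε hε
  obtain ⟨b, hb, hsub⟩ := mem_nhdsGE_iff_exists_Ico_subset.1 (mem_map.1 hS)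
  exact ⟨b, hb, fun r hr r' hr' => (hdist _ (hsub hr) _ (hsub hr')).le⟩

theorem exists_forall_dist_leftLim_le (hf : CadlagOn f) (ht : 0 ≤ t) (hε : 0 < ε) :
    ∃ δ > 0, ∀ r, 0 ≤ r → t - δ < r → r < t → dist (f r) (leftLim f t) ≤ ε := by
  rcases ht.eq_or_lt with rfl | ht
  · exact ⟨1, one_pos, fun r hr _ hrt => absurd hr hrt.not_ge⟩
  · obtain ⟨a, ha, hsub⟩ := mem_nhdsLT_iff_exists_Ioo_subset.1
      (hf.tendsto_leftLim ht (Metric.closedBall_mem_nhds _ hε))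
    exact ⟨t - a, sub_pos.2 ha, fun r _ har hrt => hsub ⟨by linarith, hrt⟩⟩

theorem induction_on_small_oscillation (hf : CadlagOn f) (hε : 0 < ε) {P : ℝ → Prop} (zero : P 0)
    (step : ∀ s t, 0 ≤ s → s < t → (∀ r ∈ Ico s t, ∀ r' ∈ Ico s t, dist (f r) (f r') ≤ ε) →
      P s → P t) {T : ℝ} (hT : 0 ≤ T) : P T := by
  set A : Set ℝ := {t | t ∈ Icc 0 T ∧ P t}
  have hA0 : (0 : ℝ) ∈ A := ⟨⟨le_rfl, hT⟩, zero⟩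
  have hAT : BddAbove A := ⟨T, fun t ht => ht.1.2⟩
  set τ := sSup A
  have hτ0 : 0 ≤ τ := le_csSup hAT hA0
  have hPτ : P τ := by
    rcases hτ0.eq_or_lt with h0 | hτpos
    · rwa [← h0]
    obtain ⟨a, haτ, hosc⟩ := hf.exists_forall_Ioo_dist_le hτpos hε
    obtain ⟨s, hsA, has⟩ := exists_lt_of_lt_csSup ⟨0, hA0⟩ haτ
    rcases (le_csSup hAT hsA).eq_or_lt with hsτ | hsτ
    · exact (congrArg P hsτ).mp hsA.2
    have hsub : Ico s τ ⊆ Ioo a τ := Ico_subset_Ioo_left has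
    exact step s τ hsA.1.1 hsτ (fun r hr r' hr' => hosc r (hsub hr) r' (hsub hr')) hsA.2
  rcases (csSup_le ⟨0, hA0⟩ fun t ht => ht.1.2 : τ ≤ T).eq_or_lt with hτT | hτT
  · exact hτT ▸ hPτ
  obtain ⟨b, hτb, hosc⟩ := hf.exists_forall_Ico_dist_le hτ0 hε
  have hτlt : τ < min b T := lt_min hτb hτT
  have hsub : Ico τ (min b T) ⊆ Ico τ b := Ico_subset_Ico_right (min_le_left b T)
  have hmem : min b T ∈ A := ⟨⟨hτ0.trans hτlt.le, min_le_right b T⟩,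
    step τ _ hτ0 hτlt (fun r hr r' hr' => hosc r (hsub hr) r' (hsub hr')) hPτ⟩
  exact absurd (le_csSup hAT hmem) hτlt.not_ge

end Oscillation

end CadlagOn

namespace DetSP

variable {y lb ub x k : ℝ → ℝ} {c s t : ℝ}

theorem neg (hsp : DetSP y lb ub x k) :
    DetSP (fun t => -y t) (fun t => -ub t) (fun t => -lb t) (fun t => -x t) (fun t => -k t) := by
  obtain ⟨hx, hk, hk0, hxk, hmin, hjump⟩ := hsp
  refine ⟨hx.continuous_comp continuous_neg, hk.continuous_comp continuous_neg, by simp [hk0],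
    fun t ht => ⟨by simp only [(hxk t ht).1, neg_add], neg_le_neg (hxk t ht).2.2,
      neg_le_neg (hxk t ht).2.1⟩, fun t q ht htq => ?_, fun t ht => ?_⟩
  · simp only [neg_lt_neg_iff]
    exact ⟨fun h => by linarith [(hmin t q ht htq).2 h],
      fun h => by linarith [(hmin t q ht htq).1 h]⟩
  · rw [leftLim_eq_of_tendsto (hk.tendsto_leftLim ht).neg]
    simp only [neg_lt_neg_iff]
    exact ⟨fun h => by linarith [(hjump t ht).2 h], fun h => by linarith [(hjump t ht).1 h]⟩

theorem lower_le (hsp : DetSP y lb ub x k) (ht : 0 ≤ t) : lb t - y t ≤ k t := by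
  linarith [(hsp.2.2.2.1 t ht).1, (hsp.2.2.2.1 t ht).2.1]

theorem le_upper (hsp : DetSP y lb ub x k) (ht : 0 ≤ t) : k t ≤ ub t - y t := by
  linarith [(hsp.2.2.2.1 t ht).1, (hsp.2.2.2.1 t ht).2.2]

theorem lt_upper_iff (hsp : DetSP y lb ub x k) (ht : 0 ≤ t) : x t < ub t ↔ k t < ub t - y t := by
  rw [(hsp.2.2.2.1 t ht).1, lt_sub_iff_add_lt']

theorem leftLim_le_of_lt_upper (hsp : DetSP y lb ub x k) (ht : 0 < t) (h : k t < ub t - y t) :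
    leftLim k t ≤ k t :=
  sub_nonneg.1 ((hsp.2.2.2.2.2 t ht).1 ((hsp.lt_upper_iff ht.le).2 h))

theorem le_of_forall_lt_upper (hsp : DetSP y lb ub x k) (hs : 0 ≤ s) (hst : s ≤ t)
    (h : ∀ r ∈ Ioc s t, k r < ub r - y r) : k s ≤ k t :=
  sub_nonneg.1 ((hsp.2.2.2.2.1 s t hs hst).1 fun r hsr hrt =>
    (hsp.lt_upper_iff (hs.trans hsr.le)).2 (h r ⟨hsr, hrt⟩))

theorem le_of_forall_le_upper (hsp : DetSP y lb ub x k) (hs : 0 ≤ s) (hst : s ≤ t) (hcs : c ≤ k s)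
    (hc : ∀ r ∈ Ioc s t, c ≤ ub r - y r) : c ≤ k t := by
  set A : Set ℝ := {r | r ∈ Icc s t ∧ c ≤ k r}
  have hsA : s ∈ A := ⟨⟨le_rfl, hst⟩, hcs⟩
  have hAt : BddAbove A := ⟨t, fun r hr => hr.1.2⟩
  set R := sSup A
  have hsR : s ≤ R := le_csSup hAt hsA
  have hRt : R ≤ t := csSup_le ⟨s, hsA⟩ fun r hr => hr.1.2
  have hcR : c ≤ k R := by
    by_contra! hlt
    have hne : ∀ r ∈ A, r < R := fun r hr =>
      (le_csSup hAt hr).lt_of_ne fun h => hlt.not_ge (hr.2.trans_eq (congrArg k h))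
    have hR0 : 0 < R := hs.trans_lt (hne s hsA)
    have hleft : leftLim k R < c :=
      (hsp.leftLim_le_of_lt_upper hR0 (hlt.trans_le (hc R ⟨hne s hsA, hRt⟩))).trans_lt hlt
    obtain ⟨d, hdR, hd⟩ := mem_nhdsLT_iff_exists_Ioo_subset.1
      ((hsp.2.1.tendsto_leftLim hR0).eventually_lt_const hleft)
    obtain ⟨r, hrA, hdr⟩ := exists_lt_of_lt_csSup ⟨s, hsA⟩ hdR
    exact (hd ⟨hdr, hne r hrA⟩ : k r < c).not_ge hrA.2
  -- After the last time `R` at which `c ≤ k`, the upper barrier is not hit: `k` cannot decrease.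
  refine hcR.trans (hsp.le_of_forall_lt_upper (hs.trans hsR) hRt fun r hr => ?_)
  have hsr : s < r := hsR.trans_lt hr.1
  have hrc : k r < c := by
    by_contra! hcr
    exact hr.1.not_ge (le_csSup hAt ⟨⟨hsr.le, hr.2⟩, hcr⟩)
  exact hrc.trans_le (hc r ⟨hsr, hr.2⟩)

theorem le_of_le_leftLim (hsp : DetSP y lb ub x k) (hs : 0 < s) (hst : s ≤ t)
    (hcs : c ≤ leftLim k s) (hc : ∀ r ∈ Icc s t, c ≤ ub r - y r) : c ≤ k t := by
  refine hsp.le_of_forall_le_upper hs.le hst ?_ fun r hr => hc r (Ioc_subset_Icc_self hr)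
  by_contra! hlt
  exact (hcs.trans (hsp.leftLim_le_of_lt_upper hs
    (hlt.trans_le (hc s (left_mem_Icc.2 hst))))).not_gt hlt

theorem le_of_forall_lower_le (hsp : DetSP y lb ub x k) (hs : 0 ≤ s) (hst : s ≤ t) (hcs : k s ≤ c)
    (hc : ∀ r ∈ Ioc s t, lb r - y r ≤ c) : k t ≤ c :=
  neg_le_neg_iff.1 (hsp.neg.le_of_forall_le_upper hs hst (neg_le_neg hcs)
    fun r hr => by linarith [hc r hr])

theorem le_of_leftLim_le (hsp : DetSP y lb ub x k) (hs : 0 < s) (hst : s ≤ t)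
    (hcs : leftLim k s ≤ c) (hc : ∀ r ∈ Icc s t, lb r - y r ≤ c) : k t ≤ c := by
  refine neg_le_neg_iff.1 (hsp.neg.le_of_le_leftLim hs hst ?_ fun r hr => by linarith [hc r hr])
  rw [leftLim_eq_of_tendsto (hsp.2.1.tendsto_leftLim hs).neg]
  exact neg_le_neg hcs

end DetSP

theorem abs_max_min_sub_le {x v a b c ε : ℝ} (hac : a ≤ c) (hcb : c ≤ b)
    (hlow : min v (b - ε) ≤ c) (hup : c ≤ max v (a + ε)) :
    |max (min x b) a - c| ≤ max |x - v| ε := by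
  set M := max |x - v| ε
  have hxv := abs_le.1 (le_max_left |x - v| ε : |x - v| ≤ M)
  have hM : 0 ≤ M := (abs_nonneg _).trans (le_max_left _ _)
  have hεM : ε ≤ M := le_max_right _ _
  rw [abs_sub_le_iff, sub_le_iff_le_add', sub_le_iff_le_add']
  constructor
  · refine max_le ?_ (hac.trans (le_add_of_nonneg_right hM))
    calc min x b ≤ min (v + M) (b - ε + M) := min_le_min (by linarith) (by linarith)
      _ = min v (b - ε) + M := min_add_add_right v (b - ε) M
      _ ≤ c + M := by gcongr
  · calc c ≤ min (max v (a + ε)) (max b (a + ε)) := le_min hup (le_max_of_le_left hcb)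
      _ = max (min v b) (a + ε) := (max_min_distrib_right v b (a + ε)).symm
      _ ≤ max (min (x + M) (b + M)) (a + M) :=
        max_le_max (min_le_min (by linarith) (by linarith)) (by linarith)
      _ = max (min x b) a + M := by rw [min_add_add_right, max_add_add_right]

/-- The barriers `lb - y` and `ub - y` between which `k` has to stay in order that `x = y + k` stays
between `lb` and `ub`. They are paired so that one distance controls the oscillation of both. -/
def regulatorBarriers (y lb ub : ℝ → ℝ) (t : ℝ) : ℝ × ℝ :=
  (lb t - y t, ub t - y t)

section Barriers

variable {y lb ub : ℝ → ℝ} {r t ε : ℝ}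

theorem lower_le_add (h : dist (regulatorBarriers y lb ub r) (regulatorBarriers y lb ub t) ≤ ε) :
    lb r - y r ≤ (regulatorBarriers y lb ub t).1 + ε :=
  sub_le_iff_le_add'.1 ((le_abs_self _).trans ((le_max_left _ _).trans h))

theorem upper_sub_le (h : dist (regulatorBarriers y lb ub r) (regulatorBarriers y lb ub t) ≤ ε) :
    (regulatorBarriers y lb ub t).2 - ε ≤ ub r - y r :=
  sub_le_comm.1 ((neg_sub (ub r - y r) _).ge.trans
    ((neg_le_abs _).trans ((le_max_right _ _).trans h)))

end Barriers

/-- The values `κ j` of the scheme started at `0` that, at each point of the grid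
`0 = g 0 < g 1 < ⋯` of mesh less than `δ`, projects the current value onto the interval between the
barriers `β`. -/
structure IsProjectionScheme (β : ℝ → ℝ × ℝ) (δ : ℝ) (g κ : ℕ → ℝ) : Prop where
  grid_zero : g 0 = 0
  grid_strictMono : StrictMono g
  mesh_lt : ∀ j, g (j + 1) < g j + δ
  zero : κ 0 = 0
  succ : ∀ j, κ (j + 1) = max (min (κ j) (β (g (j + 1))).2) (β (g (j + 1))).1

/-- On `[0, T)` the projection schemes with barriers `β` approximate `k` up to any error larger than
`ε`, provided that the mesh is fine enough. -/
def SchemesAccurateBefore (β : ℝ → ℝ × ℝ) (k : ℝ → ℝ) (ε T : ℝ) : Prop :=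
  ∀ η > 0, ∃ δ > 0, ∀ g κ, IsProjectionScheme β δ g κ → ∀ j, g j < T → |κ j - k (g j)| ≤ ε + η

namespace IsProjectionScheme

variable {β : ℝ → ℝ × ℝ} {δ δ' : ℝ} {g κ : ℕ → ℝ}

theorem mono (h : IsProjectionScheme β δ g κ) (hδ : δ ≤ δ') : IsProjectionScheme β δ' g κ :=
  { h with mesh_lt := fun j => (h.mesh_lt j).trans_le (by gcongr) }

theorem grid_nonneg (h : IsProjectionScheme β δ g κ) (j : ℕ) : 0 ≤ g j :=
  h.grid_zero ▸ h.grid_strictMono.monotone j.zero_le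

theorem of_one_div_lt {n : ℕ} (hn : 1 ≤ n) (hδ : 1 / (n : ℝ) < δ) (zero : κ 0 = 0)
    (succ : ∀ j : ℕ, κ (j + 1) =
      max (min (κ j) (β (((j : ℝ) + 1) / n)).2) (β (((j : ℝ) + 1) / n)).1) :
    IsProjectionScheme β δ (fun j => (j : ℝ) / n) κ where
  grid_zero := by simp
  grid_strictMono i j hij := by
    have : (0 : ℝ) < n := by exact_mod_cast hn
    exact div_lt_div_of_pos_right (by exact_mod_cast hij) this
  mesh_lt j := by
    push_cast
    linarith [add_div (j : ℝ) 1 n]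
  zero := zero
  succ j := by
    push_cast
    exact succ j

end IsProjectionScheme

namespace DetSP

variable {y lb ub x k : ℝ → ℝ} {s t ε : ℝ}

theorem abs_project_sub_le (hsp : DetSP y lb ub x k) (hs : 0 ≤ s) (hst : s ≤ t)
    (hosc : ∀ r ∈ Ioc s t,
      dist (regulatorBarriers y lb ub r) (regulatorBarriers y lb ub t) ≤ ε) (z : ℝ) :
    |max (min z (regulatorBarriers y lb ub t).2) (regulatorBarriers y lb ub t).1 - k t| ≤
      max |z - k s| ε := by
  refine abs_max_min_sub_le (hsp.lower_le (hs.trans hst)) (hsp.le_upper (hs.trans hst))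
    (hsp.le_of_forall_le_upper hs hst (min_le_left _ _) fun r hr => ?_)
    (hsp.le_of_forall_lower_le hs hst (le_max_left _ _) fun r hr => ?_)
  · exact (min_le_right _ _).trans (upper_sub_le (hosc r hr))
  · exact (lower_le_add (hosc r hr)).trans (le_max_right _ _)

theorem abs_project_sub_le_leftLim (hsp : DetSP y lb ub x k) (hs : 0 < s) (hst : s ≤ t)
    (hosc : ∀ r ∈ Icc s t,
      dist (regulatorBarriers y lb ub r) (regulatorBarriers y lb ub t) ≤ ε) (z : ℝ) :
    |max (min z (regulatorBarriers y lb ub t).2) (regulatorBarriers y lb ub t).1 - k t| ≤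
      max |z - leftLim k s| ε := by
  refine abs_max_min_sub_le (hsp.lower_le (hs.le.trans hst)) (hsp.le_upper (hs.le.trans hst))
    (hsp.le_of_le_leftLim hs hst (min_le_left _ _) fun r hr => ?_)
    (hsp.le_of_leftLim_le hs hst (le_max_left _ _) fun r hr => ?_)
  · exact (min_le_right _ _).trans (upper_sub_le (hosc r hr))
  · exact (lower_le_add (hosc r hr)).trans (le_max_right _ _)

theorem schemesAccurateBefore_step (hsp : DetSP y lb ub x k) (hs : 0 ≤ s) (hst : s < t)
    (hosc : ∀ r ∈ Ico s t, ∀ r' ∈ Ico s t,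
      dist (regulatorBarriers y lb ub r) (regulatorBarriers y lb ub r') ≤ ε)
    (hacc : SchemesAccurateBefore (regulatorBarriers y lb ub) k ε s) :
    SchemesAccurateBefore (regulatorBarriers y lb ub) k ε t := by
  have ⟨_, hk, hk0, _⟩ := hsp
  intro η hη
  obtain ⟨δ₁, hδ₁, haccurate⟩ := hacc (η / 2) (half_pos hη)
  obtain ⟨δ₂, hδ₂, hleft⟩ := hk.exists_forall_dist_leftLim_le hs (half_pos hη)
  refine ⟨min δ₁ δ₂, lt_min hδ₁ hδ₂, fun g κ hκ j hj => ?_⟩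
  have hε0 : 0 ≤ ε := dist_nonneg.trans (hosc s ⟨le_rfl, hst⟩ s ⟨le_rfl, hst⟩)
  have hε : ε ≤ ε + η := by linarith
  have hbefore : ∀ i, g i < s → |κ i - k (g i)| ≤ ε + η / 2 :=
    haccurate g κ (hκ.mono (min_le_left _ _))
  induction j with
  | zero =>
    rw [hκ.zero, hκ.grid_zero, hk0, sub_zero, abs_zero]
    exact hε0.trans hε
  | succ j ih =>
    have hgrid : g j < g (j + 1) := hκ.grid_strictMono j.lt_succ_self
    rcases lt_or_ge (g (j + 1)) s with hjs | hjs
    · linarith [hbefore (j + 1) hjs]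
    rw [hκ.succ]
    rcases lt_or_ge (g j) s with hgs | hgs
    · have hnear : |k (g j) - leftLim k s| ≤ η / 2 :=
        hleft (g j) (hκ.grid_nonneg j) (by linarith [hκ.mesh_lt j, min_le_right δ₁ δ₂]) hgs
      have herr : |κ j - leftLim k s| ≤ ε + η := by
        linarith [abs_sub_le (κ j) (k (g j)) (leftLim k s), hbefore j hgs]
      refine (hsp.abs_project_sub_le_leftLim ((hκ.grid_nonneg j).trans_lt hgs) hjs ?_ _).trans
        (max_le herr hε)
      exact fun r hr => hosc r ⟨hr.1, hr.2.trans_lt hj⟩ _ ⟨hjs, hj⟩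
    · refine (hsp.abs_project_sub_le (hκ.grid_nonneg j) hgrid.le ?_ _).trans
        (max_le (ih (hgrid.trans hj)) hε)
      exact fun r hr => hosc r ⟨hgs.trans hr.1.le, hr.2.trans_lt hj⟩ _ ⟨hjs, hj⟩

theorem exists_mesh_forall_abs_sub_le (hsp : DetSP y lb ub x k)
    (hβ : CadlagOn (regulatorBarriers y lb ub)) (hε : 0 < ε) {T : ℝ} (hT : 0 ≤ T) :
    ∃ δ > 0, ∀ g κ, IsProjectionScheme (regulatorBarriers y lb ub) δ g κ →
      ∀ j, g j < T → |κ j - k (g j)| ≤ ε := by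
  have hacc : SchemesAccurateBefore (regulatorBarriers y lb ub) k (ε / 2) T :=
    hβ.induction_on_small_oscillation (half_pos hε) (P := SchemesAccurateBefore _ k (ε / 2))
      (fun _ _ => ⟨1, one_pos, fun g κ hκ j hj => absurd hj (hκ.grid_nonneg j).not_gt⟩)
      (fun _ _ hs hst hosc => hsp.schemesAccurateBefore_step hs hst hosc) hT
  simpa only [add_halves] using hacc (ε / 2) (half_pos hε)

end DetSP

section UniformIntegrability

variable {α ι E : Type*} [MeasurableSpace α] {μ : Measure α} [NormedAddCommGroup E]

theorem tendsto_eLpNorm_sub_of_uniformIntegrable [IsFiniteMeasure μ] {p : ENNReal} (hp : 1 ≤ p)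
    (hp' : p ≠ ⊤) {F : Filter ι} [F.IsCountablyGenerated] {f : ι → α → E} {g : α → E}
    (hf : UniformIntegrable f p μ) (hg : MemLp g p μ)
    (hfg : ∀ᵐ a ∂μ, Tendsto (fun i => f i a) F (𝓝 (g a))) :
    Tendsto (fun i => eLpNorm (f i - g) p μ) F (𝓝 0) := by
  refine tendsto_of_seq_tendsto fun i hi => tendsto_Lp_finite_of_tendsto_ae hp hp'
    (fun n => hf.aestronglyMeasurable (i n)) hg (fun ε hε => ?_) ?_
  · obtain ⟨δ, hδ, hsmall⟩ := hf.unifIntegrable hε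
    exact ⟨δ, hδ, fun n => hsmall (i n)⟩
  · filter_upwards [hfg] with a ha using ha.comp hi

end UniformIntegrability

namespace NiceProcess

variable {Ω : Type*} [MeasurableSpace Ω] {μ : Measure Ω} {Y : ℝ → Ω → ℝ} {s t : ℝ}

/-- The path `t ↦ Y t` in `L¹`. Only the values at `t ≥ 0` are known to be integrable, so the path
is extended to negative times by `Y 0`. -/
def toL1 (hY : NiceProcess μ Y) (t : ℝ) : Ω →₁[μ] ℝ :=
  (hY.integrable (max t 0) (le_max_right t 0)).toL1

theorem toL1_of_nonneg (hY : NiceProcess μ Y) (ht : 0 ≤ t) :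
    hY.toL1 t = (hY.integrable t ht).toL1 := by
  simp only [toL1, max_eq_left ht]

theorem dist_toL1 (hY : NiceProcess μ Y) (hs : 0 ≤ s) (ht : 0 ≤ t) :
    dist (hY.toL1 s) (hY.toL1 t) = ∫ ω, |Y s ω - Y t ω| ∂μ := by
  rw [hY.toL1_of_nonneg hs, hY.toL1_of_nonneg ht, dist_eq_norm, ← Integrable.toL1_sub,
    L1.norm_of_fun_eq_integral_norm]
  rfl

theorem exists_tendsto_toL1 [IsFiniteMeasure μ] (hY : NiceProcess μ Y) {F : Filter ℝ} [F.NeBot]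
    [F.IsCountablyGenerated] {q : ℝ} (hF : Icc 0 q ∈ F) {Z : Ω → ℝ}
    (hZ : ∀ ω, Tendsto (fun t => Y t ω) F (𝓝 (Z ω))) :
    ∃ hZ : Integrable Z μ, Tendsto hY.toL1 F (𝓝 hZ.toL1) := by
  have hui := hY.unifInt q (nonempty_Icc.1 (F.nonempty_of_mem hF))
  have : (comap ((↑) : Icc 0 q → ℝ) F).NeBot :=
    comap_coe_neBot_of_le_principal (le_principal_iff.2 hF)
  have hlim : ∀ᵐ ω ∂μ, Tendsto (fun t : Icc 0 q => Y t ω) (comap (↑) F) (𝓝 (Z ω)) :=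
    .of_forall fun ω => (hZ ω).comp tendsto_comap
  have hZ1 : MemLp Z 1 μ := hui.memLp_of_ae_tendsto hlim
  refine ⟨memLp_one_iff_integrable.1 hZ1, ?_⟩
  have hL1 := (Lp.tendsto_Lp_iff_tendsto_eLpNorm'' (fun t : Icc 0 q => Y t)
    hui.memLp Z hZ1).2
      (tendsto_eLpNorm_sub_of_uniformIntegrable le_rfl ENNReal.one_ne_top hui hZ1 hlim)
  rw [← map_comap_of_mem (f := F) (m := ((↑) : Icc 0 q → ℝ)) (by rwa [Subtype.range_coe]),
    tendsto_map'_iff]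
  exact hL1.congr fun t => (hY.toL1_of_nonneg t.2.1).symm

theorem cadlagOn_toL1 [IsFiniteMeasure μ] (hY : NiceProcess μ Y) : CadlagOn hY.toL1 := by
  refine ⟨fun t ht => ?_, fun t ht => ?_⟩
  · have hF : Icc 0 (t + 1) ∈ 𝓝[≥] t :=
      mem_of_superset (Icc_mem_nhdsGE (lt_add_one t)) (Icc_subset_Icc_left ht)
    obtain ⟨_, hlim⟩ := hY.exists_tendsto_toL1 hF fun ω => (hY.cadlag ω).1 t ht
    rwa [← hY.toL1_of_nonneg ht] at hlim
  · have hF : Icc 0 t ∈ 𝓝[<] t := mem_of_superset (Ioo_mem_nhdsLT ht) Ioo_subset_Icc_self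
    obtain ⟨_, hlim⟩ := hY.exists_tendsto_toL1 hF fun ω => (hY.cadlag ω).tendsto_leftLim ht
    exact ⟨_, hlim⟩

theorem cadlagOn_integral [IsFiniteMeasure μ] (hY : NiceProcess μ Y) :
    CadlagOn fun t => ∫ ω, Y t ω ∂μ := by
  refine hY.cadlagOn_toL1.of_dist_le (C := 1) fun s t hs ht => ?_
  rw [one_mul, hY.dist_toL1 hs ht, Real.dist_eq,
    ← integral_sub (hY.integrable s hs) (hY.integrable t ht)]
  exact abs_integral_le_integral_abs

end NiceProcess

namespace CondH

variable {Ω : Type*} [MeasurableSpace Ω] {μ : Measure Ω} {h : ℝ → ℝ → ℝ} {Mh Lh ch Ch : ℝ}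
  {Z Z' : Ω → ℝ} {s t x y : ℝ}

theorem integrable_comp_s16 [IsFiniteMeasure μ] (hH : CondH h Mh Lh ch Ch) (ht : 0 ≤ t)
    (hZ : Integrable Z μ) : Integrable (fun ω => h t (Z ω)) μ := by
  have hmeas : Measurable (h t) := hH.meas.comp measurable_prodMk_left
  exact (((integrable_const 1).add hZ.abs).const_mul Mh).mono'
    (hmeas.comp_aemeasurable hZ.aemeasurable).aestronglyMeasurable
    (.of_forall fun ω => hH.growth t (Z ω) ht)

theorem abs_integral_sub_integral_le [IsProbabilityMeasure μ] (hH : CondH h Mh Lh ch Ch)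
    (hs : 0 ≤ s) (ht : 0 ≤ t) (hZ : Integrable Z μ) (hZ' : Integrable Z' μ) :
    |(∫ ω, h s (Z ω) ∂μ) - ∫ ω, h t (Z' ω) ∂μ| ≤ Lh * |s - t| + Ch * ∫ ω, |Z ω - Z' ω| ∂μ := by
  have hdiff : Integrable (fun ω => Ch * |Z ω - Z' ω|) μ := (hZ.sub hZ').abs.const_mul Ch
  have hh := hH.integrable_comp_s16 hs hZ
  have hh' := hH.integrable_comp_s16 ht hZ'
  calc |(∫ ω, h s (Z ω) ∂μ) - ∫ ω, h t (Z' ω) ∂μ|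
      = |∫ ω, (h s (Z ω) - h t (Z' ω)) ∂μ| := by rw [integral_sub hh hh']
    _ ≤ ∫ ω, |h s (Z ω) - h t (Z' ω)| ∂μ := abs_integral_le_integral_abs
    _ ≤ ∫ ω, (Lh * |s - t| + Ch * |Z ω - Z' ω|) ∂μ := by
      refine integral_mono (hh.sub hh').abs ((integrable_const _).add hdiff) fun ω => ?_
      exact (abs_sub_le _ (h t (Z ω)) _).trans
        (add_le_add (hH.lip_time t s (Z ω) ht hs) (hH.lip_upper t (Z ω) (Z' ω) ht))
    _ = Lh * |s - t| + Ch * ∫ ω, |Z ω - Z' ω| ∂μ := by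
      rw [integral_add (integrable_const _) hdiff, integral_const, probReal_univ, one_smul,
        integral_const_mul]

theorem mul_sub_le_integral_sub [IsProbabilityMeasure μ] (hH : CondH h Mh Lh ch Ch) (ht : 0 ≤ t)
    (hZ : Integrable Z μ) (hxy : x ≤ y) :
    ch * (y - x) ≤ (∫ ω, h t (Z ω + y) ∂μ) - ∫ ω, h t (Z ω + x) ∂μ := by
  have hint (z : ℝ) : Integrable (fun ω => h t (Z ω + z)) μ :=
    hH.integrable_comp_s16 ht (hZ.add (integrable_const z))
  have hlower (ω : Ω) : ch * (y - x) ≤ h t (Z ω + y) - h t (Z ω + x) := by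
    have hmono := (hH.strict_mono t ht).monotone (add_le_add_right hxy (Z ω))
    have := hH.lip_lower t (Z ω + y) (Z ω + x) ht
    rwa [add_sub_add_left_eq_sub, abs_of_nonneg (sub_nonneg.2 hxy),
      abs_of_nonneg (sub_nonneg.2 hmono)] at this
  calc ch * (y - x) = ∫ _, ch * (y - x) ∂μ := by rw [integral_const, probReal_univ, one_smul]
    _ ≤ ∫ ω, (h t (Z ω + y) - h t (Z ω + x)) ∂μ :=
      integral_mono (integrable_const _) ((hint y).sub (hint x)) hlower
    _ = (∫ ω, h t (Z ω + y) ∂μ) - ∫ ω, h t (Z ω + x) ∂μ := integral_sub (hint y) (hint x)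

theorem strictMono_integral [IsProbabilityMeasure μ] (hH : CondH h Mh Lh ch Ch) (ht : 0 ≤ t)
    (hZ : Integrable Z μ) : StrictMono fun x => ∫ ω, h t (Z ω + x) ∂μ := fun _ _ hxy =>
  sub_pos.1 ((mul_pos hH.ch_pos (sub_pos.2 hxy)).trans_le (hH.mul_sub_le_integral_sub ht hZ hxy.le))

theorem mul_abs_sub_le_abs_integral_sub [IsProbabilityMeasure μ] (hH : CondH h Mh Lh ch Ch)
    (ht : 0 ≤ t) (hZ : Integrable Z μ) (x y : ℝ) :
    ch * |x - y| ≤ |(∫ ω, h t (Z ω + x) ∂μ) - ∫ ω, h t (Z ω + y) ∂μ| := by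
  wlog hyx : y ≤ x generalizing x y
  · rw [abs_sub_comm x, abs_sub_comm (∫ ω, h t (Z ω + x) ∂μ)]
    exact this y x (le_of_not_ge hyx)
  rw [abs_of_nonneg (sub_nonneg.2 hyx)]
  exact (hH.mul_sub_le_integral_sub ht hZ hyx).trans (le_abs_self _)

theorem mul_abs_sub_le_abs_integral_sub_add [IsProbabilityMeasure μ] (hH : CondH h Mh Lh ch Ch)
    (hs : 0 ≤ s) (ht : 0 ≤ t) (hZ : Integrable Z μ) (hZ' : Integrable Z' μ) (x y : ℝ) :
    ch * |x - y| ≤ |(∫ ω, h s (Z ω + x) ∂μ) - ∫ ω, h t (Z' ω + y) ∂μ| +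
      (Lh * |s - t| + Ch * ∫ ω, |Z ω - Z' ω| ∂μ) := by
  have hmove := hH.abs_integral_sub_integral_le hs ht (hZ.add (integrable_const y))
    (hZ'.add (integrable_const y))
  simp only [Pi.add_apply, add_sub_add_right_eq_sub] at hmove
  calc ch * |x - y| ≤ |(∫ ω, h s (Z ω + x) ∂μ) - ∫ ω, h s (Z ω + y) ∂μ| :=
      hH.mul_abs_sub_le_abs_integral_sub hs hZ x y
    _ ≤ |(∫ ω, h s (Z ω + x) ∂μ) - ∫ ω, h t (Z' ω + y) ∂μ| +
        |(∫ ω, h t (Z' ω + y) ∂μ) - ∫ ω, h s (Z ω + y) ∂μ| := abs_sub_le _ _ _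
    _ ≤ |(∫ ω, h s (Z ω + x) ∂μ) - ∫ ω, h t (Z' ω + y) ∂μ| +
        (Lh * |s - t| + Ch * ∫ ω, |Z ω - Z' ω| ∂μ) := by
      gcongr
      rwa [abs_sub_comm]

end CondH

section MeanProblem

variable {Ω : Type*} [MeasurableSpace Ω] {μ : Measure Ω} [IsProbabilityMeasure μ]
  {h : ℝ → ℝ → ℝ} {Mh Lh ch Ch : ℝ} {Y X : ℝ → Ω → ℝ} {l u a lbar ubar k : ℝ → ℝ}

theorem NiceProcess.cadlagOn_of_integral_eq (hY : NiceProcess μ Y)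
    (hH : CondH h Mh Lh ch Ch) (hl : CadlagOn l)
    (ha : ∀ t, 0 ≤ t → ∫ ω, h t (Y t ω + a t) ∂μ = l t) : CadlagOn a := by
  have hdata : CadlagOn fun t => (l t, t, hY.toL1 t) :=
    hl.prodMk ((CadlagOn.of_continuous continuous_id).prodMk hY.cadlagOn_toL1)
  refine hdata.of_dist_le (C := (1 + (Lh + Ch)) / ch) fun s t hs ht => ?_
  set D := dist (l s, s, hY.toL1 s) (l t, t, hY.toL1 t)
  have hlD : |l s - l t| ≤ D := le_max_left _ _
  have htD : |s - t| ≤ D := (le_max_left _ _).trans (le_max_right _ _)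
  have hYD : ∫ ω, |Y s ω - Y t ω| ∂μ ≤ D :=
    (hY.dist_toL1 hs ht).ge.trans ((le_max_right _ _).trans (le_max_right _ _))
  have hbound := hH.mul_abs_sub_le_abs_integral_sub_add hs ht (hY.integrable s hs)
    (hY.integrable t ht) (a s) (a t)
  rw [ha s hs, ha t ht] at hbound
  rw [Real.dist_eq, div_mul_eq_mul_div, le_div_iff₀' hH.ch_pos]
  calc ch * |a s - a t| ≤ |l s - l t| + (Lh * |s - t| + Ch * ∫ ω, |Y s ω - Y t ω| ∂μ) := hbound
    _ ≤ D + (Lh * D + Ch * D) := by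
      have := hH.Lh_pos
      have := hH.Ch_pos
      gcongr
    _ = (1 + (Lh + Ch)) * D := by ring

theorem NiceProcess.cadlagOn_sub_mean (hY : NiceProcess μ Y) (hH : CondH h Mh Lh ch Ch)
    (hl : CadlagOn l)
    (ha : ∀ t, 0 ≤ t → (∫ ω, h t (Y t ω - (∫ ω', Y t ω' ∂μ) + a t) ∂μ) = l t) :
    CadlagOn fun t => a t - ∫ ω, Y t ω ∂μ := by
  refine hY.cadlagOn_of_integral_eq hH hl fun t ht => ?_
  simpa only [sub_add_eq_add_sub, add_sub_assoc] using ha t ht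

theorem MeanSP.detSP (hsol : MeanSP μ h Y l u X k) (hH : CondH h Mh Lh ch Ch)
    (hY : NiceProcess μ Y)
    (hlbar : ∀ t, 0 ≤ t → (∫ ω, h t (Y t ω - (∫ ω', Y t ω' ∂μ) + lbar t) ∂μ) = l t)
    (hubar : ∀ t, 0 ≤ t → (∫ ω, h t (Y t ω - (∫ ω', Y t ω' ∂μ) + ubar t) ∂μ) = u t) :
    DetSP (fun t => ∫ ω, Y t ω ∂μ) lbar ubar (fun t => (∫ ω, Y t ω ∂μ) + k t) k := by
  obtain ⟨-, hk, hk0, hXk, hmem, hmin, hjump⟩ := hsol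
  set m : ℝ → ℝ := fun t => ∫ ω, Y t ω ∂μ
  have hmono (t : ℝ) (ht : 0 ≤ t) : StrictMono fun x => ∫ ω, h t (Y t ω - m t + x) ∂μ :=
    hH.strictMono_integral ht ((hY.integrable t ht).sub (integrable_const (m t)))
  have hmean (t : ℝ) (ht : 0 ≤ t) :
      ∫ ω, h t (X t ω) ∂μ = ∫ ω, h t (Y t ω - m t + (m t + k t)) ∂μ := by
    simp only [hXk t ht, ← add_assoc, sub_add_cancel]
  have hlower {t : ℝ} (ht : 0 ≤ t) (hlt : lbar t < m t + k t) : l t < ∫ ω, h t (X t ω) ∂μ := by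
    rw [← hlbar t ht, hmean t ht]
    exact hmono t ht hlt
  have hupper {t : ℝ} (ht : 0 ≤ t) (hlt : m t + k t < ubar t) : ∫ ω, h t (X t ω) ∂μ < u t := by
    rw [← hubar t ht, hmean t ht]
    exact hmono t ht hlt
  have hbounds (t : ℝ) (ht : 0 ≤ t) : m t + k t ∈ Icc (lbar t) (ubar t) := by
    have hmem_t := hmem t ht
    rw [← hlbar t ht, ← hubar t ht, hmean t ht] at hmem_t
    exact ⟨(hmono t ht).le_iff_le.1 hmem_t.1, (hmono t ht).le_iff_le.1 hmem_t.2⟩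
  refine ⟨(hY.cadlagOn_integral.prodMk hk).continuous_comp continuous_add, hk, hk0,
    fun t ht => ⟨rfl, hbounds t ht⟩, fun t q ht htq => ⟨fun hlt => ?_, fun hlt => ?_⟩,
    fun t ht => ⟨fun hlt => (hjump t ht).1 (hupper ht.le hlt),
      fun hlt => (hjump t ht).2 (hlower ht.le hlt)⟩⟩
  · exact (hmin t q ht htq).1 fun s hts hsq => hupper (ht.trans hts.le) (hlt s hts hsq)
  · exact (hmin t q ht htq).2 fun s hts hsq => hlower (ht.trans hts.le) (hlt s hts hsq)

end MeanProblem

theorem tendsto_sSup_image_zero {ι α : Type*} {F : Filter ι} {f : ι → α → ℝ} {S : ι → Set α}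
    (hf : ∀ i a, 0 ≤ f i a) (hsmall : ∀ ε > 0, ∀ᶠ i in F, ∀ a ∈ S i, f i a ≤ ε) :
    Tendsto (fun i => sSup (f i '' S i)) F (𝓝 0) := by
  refine tendsto_order.2 ⟨fun c hc => .of_forall fun i => hc.trans_le ?_, fun c hc => ?_⟩
  · exact Real.sSup_nonneg (forall_mem_image.2 fun a _ => hf i a)
  · filter_upwards [hsmall (c / 2) (half_pos hc)] with i hi
    exact (Real.sSup_le (forall_mem_image.2 hi) (half_pos hc).le).trans_lt (half_lt_self hc)

/-- convergence of the discrete approximation scheme for the Skorokhod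
problem with mean minimality condition and two constraints. -/
theorem stmt_16 {Ω : Type*} [MeasurableSpace Ω] (μ : Measure Ω) [IsProbabilityMeasure μ]
    (h : ℝ → ℝ → ℝ) (Mh Lh ch Ch : ℝ) (hH : CondH h Mh Lh ch Ch)
    (Y : ℝ → Ω → ℝ) (hY : NiceProcess μ Y)
    (l u : ℝ → ℝ) (hl : CadlagOn l) (hu : CadlagOn u)
    (hlu : ∀ t : ℝ, 0 ≤ t → l t ≤ u t)
    (h0 : (∫ ω, h 0 (Y 0 ω) ∂μ) ∈ Set.Icc (l 0) (u 0))
    (lbar ubar : ℝ → ℝ)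
    (hlbar : ∀ t : ℝ, 0 ≤ t → (∫ ω, h t (Y t ω - (∫ ω', Y t ω' ∂μ) + lbar t) ∂μ) = l t)
    (hubar : ∀ t : ℝ, 0 ≤ t → (∫ ω, h t (Y t ω - (∫ ω', Y t ω' ∂μ) + ubar t) ∂μ) = u t)
    (X : ℝ → Ω → ℝ) (k : ℝ → ℝ) (hsol : MeanSP μ h Y l u X k)
    (kn : ℕ → ℕ → ℝ) (hkn0 : ∀ n, kn n 0 = 0)
    (hknrec : ∀ n : ℕ, 1 ≤ n → ∀ j : ℕ,
      kn n (j + 1) = max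
        (min (kn n j)
          (ubar (((j : ℝ) + 1) / n) - ∫ ω, Y (((j : ℝ) + 1) / n) ω ∂μ))
        (lbar (((j : ℝ) + 1) / n) - ∫ ω, Y (((j : ℝ) + 1) / n) ω ∂μ))
    (Xn : ℕ → ℕ → Ω → ℝ)
    (hXn : ∀ n j ω, Xn n j ω = Y ((j : ℝ) / n) ω + kn n j)
    (q : ℝ) (hq : 0 ≤ q) :
    Filter.Tendsto
      (fun n : ℕ => sSup ((fun j : ℕ => |kn n j - k ((j : ℝ) / n)|) ''
        {j : ℕ | (j : ℝ) / n ≤ q}))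
      Filter.atTop (nhds 0) ∧
    ∀ᵐ ω ∂μ, Filter.Tendsto
      (fun n : ℕ => sSup ((fun j : ℕ =>
          |Xn n j ω - X ((j : ℝ) / n) ω| + |kn n j - k ((j : ℝ) / n)|) ''
        {j : ℕ | (j : ℝ) / n ≤ q}))
      Filter.atTop (nhds 0) := by
  have hbarriers : CadlagOn (regulatorBarriers (fun t => ∫ ω, Y t ω ∂μ) lbar ubar) :=
    (hY.cadlagOn_sub_mean hH hl hlbar).prodMk (hY.cadlagOn_sub_mean hH hu hubar)
  have ⟨_, _, _, hXk, _⟩ := hsol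
  have hk : ∀ ε > 0, ∀ᶠ n : ℕ in atTop, ∀ j ∈ {j : ℕ | (j : ℝ) / n ≤ q},
      |kn n j - k ((j : ℝ) / n)| ≤ ε := fun ε hε => by
    obtain ⟨δ, hδ, hclose⟩ := (hsol.detSP hH hY hlbar hubar).exists_mesh_forall_abs_sub_le
      hbarriers hε (hq.trans (le_add_of_nonneg_right zero_le_one))
    filter_upwards [eventually_ge_atTop 1,
      tendsto_one_div_atTop_nhds_zero_nat.eventually_lt_const hδ] with n hn hnδ j hj
    exact hclose _ _ (.of_one_div_lt hn hnδ (hkn0 n) (hknrec n hn)) j (hj.trans_lt (lt_add_one q))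
  refine ⟨tendsto_sSup_image_zero (fun _ _ => abs_nonneg _) hk, .of_forall fun ω =>
    tendsto_sSup_image_zero (fun _ _ => by positivity) fun ε hε => ?_⟩
  filter_upwards [hk (ε / 2) (half_pos hε)] with n hn j hj
  have hX : Xn n j ω - X ((j : ℝ) / n) ω = kn n j - k ((j : ℝ) / n) := by
    rw [hXn, hXk _ (by positivity), add_sub_add_left_eq_sub]
  rw [hX]
  linarith [hn j hj]
end
end

section
/- Let y, υ : [0,∞) → ℝ be càdlàg functions with y_0 ≤ υ_0. Define k_t = −sup_{s≤t} (y_s − υ_s)⁺ (where a⁺ = max(a, 0)) and x_t = y_t + k_t. Then k is nonincreasing and càdlàg with k_0 = 0, x_t ≤ υ_t for all t ≥ 0, and ∫_{[0,t]} (υ_s − x_s) d(−k)_s = 0 for every t ≥ 0, where d(−k) denotes the Lebesgue–Stieltjes measure of the nondecreasing right-continuous function −k; that is, (x, k) solves the deterministic Skorokhod problem with the single upper barrier υ. -/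
open MeasureTheory Filter Set Function Topology

noncomputable section

/-!
Let `z = y - ub`, so that `-k` is the running supremum of `z` started at level `0` and
`ub - x = -k - z`. The measure `d(-k)` does not charge `{t > 0 | z t < -k t}`: upper semicontinuity
of `z` from the right makes `-k` constant just after each such point, and `-k` has no jump there
because it already comes arbitrarily close to its value strictly before. Every such point thus has a
null right neighbourhood, which suffices because all but countably many of them are interior to the
right neighbourhood of another one.
-/

theorem bddAbove_image_of_isBoundedUnder_nhdsWithin {α β : Type*} [TopologicalSpace α]
    [LinearOrder β] [Nonempty β] {f : α → β} {K : Set α} (hK : IsCompact K)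
    (hf : ∀ x ∈ K, (𝓝[K] x).IsBoundedUnder (· ≤ ·) f) : BddAbove (f '' K) := by
  refine hK.induction_on (p := fun s => BddAbove (f '' s)) (by simp)
    (fun s t hst ht => ht.mono (image_mono hst))
    (fun s t hs ht => by simpa only [image_union] using hs.union ht) fun x hx => ?_
  obtain ⟨c, hc⟩ := hf x hx
  exact ⟨{r | f r ≤ c}, hc, c, forall_mem_image.2 fun _ hr => hr⟩

theorem bddAbove_image_max_const {α β : Type*} [LinearOrder β] {f : α → β} {S : Set α}
    (hf : BddAbove (f '' S)) (b : β) : BddAbove ((fun s => max (f s) b) '' S) := by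
  obtain ⟨c, hc⟩ := hf
  exact ⟨max c b, forall_mem_image.2 fun s hs => max_le_max_right b (hc (mem_image_of_mem f hs))⟩

namespace CadlagOn

variable {E : Type*} [TopologicalSpace E]

theorem sub [Sub E] [ContinuousSub E] {f g : ℝ → E} (hf : CadlagOn f) (hg : CadlagOn g) :
    CadlagOn fun t => f t - g t := by
  refine ⟨fun t ht => (hf.1 t ht).sub (hg.1 t ht), fun t ht => ?_⟩
  obtain ⟨L, hL⟩ := hf.2 t ht
  obtain ⟨M, hM⟩ := hg.2 t ht
  exact ⟨L - M, hL.sub hM⟩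

theorem bddAbove_image_Icc [LinearOrder E] [OrderTopology E] {f : ℝ → E} (hf : CadlagOn f)
    (t : ℝ) : BddAbove (f '' Icc 0 t) := by
  have : Nonempty E := ⟨f 0⟩
  refine bddAbove_image_of_isBoundedUnder_nhdsWithin isCompact_Icc fun s hs => ?_
  have hright : (𝓝[≥] s).IsBoundedUnder (· ≤ ·) f := (hf.1 s hs.1).isBoundedUnder_le
  rcases hs.1.eq_or_lt with rfl | hpos
  · exact hright.mono (nhdsWithin_mono _ Icc_subset_Ici_self)
  · obtain ⟨L, hL⟩ := hf.2 s hpos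
    have hnhds : (𝓝 s).IsBoundedUnder (· ≤ ·) f := by
      rw [← nhdsLT_sup_nhdsGE, IsBoundedUnder, map_sup]
      exact isBounded_sup hL.isBoundedUnder_le hright
    exact hnhds.mono nhdsWithin_le_nhds

theorem of_antitoneOn [ConditionallyCompleteLinearOrder E] [OrderTopology E] {f : ℝ → E}
    (hf : AntitoneOn f (Ici 0)) (hright : ∀ t, 0 ≤ t → ContinuousWithinAt f (Ici t) t) :
    CadlagOn f := by
  refine ⟨hright, fun t ht => ⟨_, (hf.mono ?_).tendsto_nhdsWithin_Ioo_left
    (nonempty_Ioo.2 ht) ⟨f t, forall_mem_image.2 fun s hs => ?_⟩⟩⟩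
  · exact fun s hs => hs.1.le
  · exact hf hs.1.le ht.le hs.2.le

end CadlagOn

section RunningSup

variable {α β : Type*} [LinearOrder α] [ConditionallyCompleteLinearOrder β]

/-- The running supremum `sup_{a ≤ s ≤ t} max (z s) b` of `z` from time `a`, started at level `b`.
With `β = ℝ` and `b = 0` this is the regulator of the one-sided Skorokhod problem. Its values are
meaningful only when `a ≤ t` and `z` is bounded above on `[a, t]`. -/
def runningSup (b : β) (z : α → β) (a t : α) : β :=
  sSup ((fun s => max (z s) b) '' Icc a t)

variable {b c : β} {z : α → β} {a r s t : α}

theorem max_apply_le_runningSup (b : β) (hz : BddAbove (z '' Icc a t)) (hs : s ∈ Icc a t) :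
    max (z s) b ≤ runningSup b z a t :=
  le_csSup (bddAbove_image_max_const hz b) (mem_image_of_mem (fun s => max (z s) b) hs)

theorem apply_le_runningSup (b : β) (hz : BddAbove (z '' Icc a t)) (hs : s ∈ Icc a t) :
    z s ≤ runningSup b z a t :=
  (le_max_left _ _).trans (max_apply_le_runningSup b hz hs)

theorem le_runningSup (b : β) (hz : BddAbove (z '' Icc a t)) (hat : a ≤ t) :
    b ≤ runningSup b z a t :=
  (le_max_right _ _).trans (max_apply_le_runningSup b hz (left_mem_Icc.2 hat))

theorem runningSup_le (hat : a ≤ t) (hb : b ≤ c) (hz : ∀ s ∈ Icc a t, z s ≤ c) :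
    runningSup b z a t ≤ c :=
  csSup_le ((nonempty_Icc.2 hat).image _) (forall_mem_image.2 fun s hs => max_le (hz s hs) hb)

theorem runningSup_self (b : β) (z : α → β) (a : α) : runningSup b z a a = max (z a) b := by
  rw [runningSup, Icc_self, image_singleton, csSup_singleton]

theorem monotoneOn_runningSup (b : β) (hz : ∀ t, BddAbove (z '' Icc a t)) :
    MonotoneOn (runningSup b z a) (Ici a) := fun _ hs _ _ hst =>
  csSup_le_csSup (bddAbove_image_max_const (hz _) b) ((nonempty_Icc.2 hs).image _)
    (image_mono (Icc_subset_Icc_right hst))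

theorem exists_lt_runningSup_of_apply_lt (hz : ∀ t, BddAbove (z '' Icc a t)) (has : a < s)
    (hzs : z s < runningSup b z a s) (hc : c < runningSup b z a s) :
    ∃ r ∈ Ico a s, c < runningSup b z a r := by
  obtain ⟨_, ⟨r, hr, rfl⟩, hlt⟩ :=
    exists_lt_of_lt_csSup ((nonempty_Icc.2 has.le).image _) (max_lt hc hzs)
  obtain ⟨hcr, hsr⟩ : c < max (z r) b ∧ z s < max (z r) b := max_lt_iff.1 hlt
  rcases hr.2.lt_or_eq with hrs | rfl
  · exact ⟨r, ⟨hr.1, hrs⟩, hcr.trans_le (max_apply_le_runningSup b (hz r) (right_mem_Icc.2 hr.1))⟩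
  · -- The supremum exceeds `c` only through its starting level `b`.
    have hzb : z r < b := (lt_max_iff.1 hsr).resolve_left (lt_irrefl _)
    have hcb : c < b := by rwa [max_eq_right hzb.le] at hcr
    exact ⟨a, left_mem_Ico.2 has, hcb.trans_le (le_runningSup b (hz a) le_rfl)⟩

section Topology

variable [TopologicalSpace α] [OrderTopology α]

theorem eventually_runningSup_le (hz : ∀ t, BddAbove (z '' Icc a t)) (hat : a ≤ t)
    (husc : UpperSemicontinuousWithinAt z (Ici t) t) (hzt : z t < c)
    (hc : runningSup b z a t ≤ c) : ∀ᶠ r in 𝓝[≥] t, runningSup b z a r ≤ c := by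
  have hIcc : Tendsto (Icc t) (𝓝[≥] t) (𝓝[≥] t).smallSets :=
    (tendsto_const_pure.mono_right (pure_le_nhdsWithin self_mem_Ici)).Icc tendsto_id
  filter_upwards [hIcc.eventually (eventually_smallSets_forall.2 (husc c hzt)),
    self_mem_nhdsWithin] with r hr htr
  refine runningSup_le (hat.trans htr) ((le_runningSup b (hz t) hat).trans hc) fun s hs => ?_
  rcases le_total s t with hst | hts
  · exact (apply_le_runningSup b (hz t) ⟨hs.1, hst⟩).trans hc
  · exact (hr s ⟨hts, hs.2⟩).le

theorem eventually_runningSup_eq (hz : ∀ t, BddAbove (z '' Icc a t)) (hat : a ≤ t)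
    (husc : UpperSemicontinuousWithinAt z (Ici t) t) (hzt : z t < runningSup b z a t) :
    ∀ᶠ r in 𝓝[≥] t, runningSup b z a r = runningSup b z a t := by
  filter_upwards [eventually_runningSup_le hz hat husc hzt le_rfl, self_mem_nhdsWithin]
    with r hr htr
  exact hr.antisymm (monotoneOn_runningSup b hz hat (hat.trans htr) htr)

theorem continuousWithinAt_runningSup [TopologicalSpace β] [OrderTopology β] [DenselyOrdered β]
    (hz : ∀ t, BddAbove (z '' Icc a t)) (hat : a ≤ t)
    (husc : UpperSemicontinuousWithinAt z (Ici t) t) :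
    ContinuousWithinAt (runningSup b z a) (Ici t) t := by
  refine tendsto_order.2 ⟨fun c hc => ?_, fun c hc => ?_⟩
  · filter_upwards [self_mem_nhdsWithin] with r htr
    exact hc.trans_le (monotoneOn_runningSup b hz hat (hat.trans htr) htr)
  · obtain ⟨d, htd, hdc⟩ := exists_between hc
    have hzd := (apply_le_runningSup b (hz t) (right_mem_Icc.2 hat)).trans_lt htd
    filter_upwards [eventually_runningSup_le hz hat husc hzd htd.le] with r hr
    exact hr.trans_lt hdc

end Topology

end RunningSup

section Measure

variable {α : Type*} [LinearOrder α] [MeasurableSpace α] {ν : Measure α}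

theorem measure_singleton_eq_zero_of_forall_exists_lt {F : α → ℝ} {a s : α}
    (hν : ∀ p q, a ≤ p → p ≤ q → ν (Ioc p q) = ENNReal.ofReal (F q - F p))
    (hF : ∀ c < F s, ∃ r ∈ Ico a s, c < F r) : ν {s} = 0 := by
  refine le_antisymm (ENNReal.le_of_forall_pos_le_add fun ε hε _ => ?_) zero_le
  obtain ⟨r, hr, hlt⟩ := hF (F s - ε) (sub_lt_self _ (NNReal.coe_pos.2 hε))
  calc ν {s} ≤ ν (Ioc r s) := measure_mono (singleton_subset_iff.2 (right_mem_Ioc.2 hr.2))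
    _ = ENNReal.ofReal (F s - F r) := hν r s hr.1 hr.2.le
    _ ≤ ENNReal.ofReal ε := ENNReal.ofReal_le_ofReal (by linarith)
    _ = 0 + ε := by rw [ENNReal.ofReal_coe_nnreal, zero_add]

variable [TopologicalSpace α] [OrderTopology α]

theorem measure_null_of_forall_nhdsGE_null [SecondCountableTopology α] {S : Set α}
    (hS : ∀ x ∈ S, ∃ u ∈ 𝓝[≥] x, ν u = 0) : ν S = 0 := by
  choose! u hu hνu using hS
  choose! V hVo hxV hVu using fun x hx => mem_nhdsWithin.1 (hu x hx)
  let T := ⋃ x ∈ S, V x ∩ Ioi x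
  have hT : ν T = 0 := by
    refine measure_null_of_locally_null T fun x hx => ?_
    obtain ⟨s, hs, hxs⟩ := mem_iUnion₂.1 hx
    exact ⟨_, mem_nhdsWithin_of_mem_nhds (((hVo s hs).inter isOpen_Ioi).mem_nhds hxs),
      measure_mono_null ((inter_subset_inter_right _ Ioi_subset_Ici_self).trans (hVu s hs))
        (hνu s hs)⟩
  have hcountable : (S \ T).Countable := by
    refine (countable_setOfPred_isolated_right_within (s := S \ T)).mono fun x hx => ?_
    suffices h : 𝓝[(S \ T) ∩ Ioi x] x = ⊥ from ⟨hx, h⟩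
    rw [← empty_mem_iff_bot, mem_nhdsWithin]
    exact ⟨V x, hVo x hx.1, hxV x hx.1, fun _ hy =>
      hy.2.1.2 (mem_iUnion₂.2 ⟨x, hx.1, hy.1, hy.2.2⟩)⟩
  have hdiff : ν (S \ T) = 0 := by
    rw [← biUnion_of_singleton (S \ T), measure_biUnion_null_iff hcountable]
    exact fun x hx => measure_mono_null
      (singleton_subset_iff.2 (hVu x hx.1 ⟨hxV x hx.1, self_mem_Ici⟩)) (hνu x hx.1)
  exact measure_mono_null (subset_sdiff_union S T) (measure_union_null hdiff hT)

theorem ae_eq_runningSup_of_measure_Ioc [SecondCountableTopology α] [DenselyOrdered α]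
    [NoMaxOrder α] {b : ℝ} {z : α → ℝ} {a : α}
    (husc : ∀ t, a ≤ t → UpperSemicontinuousWithinAt z (Ici t) t)
    (hz : ∀ t, BddAbove (z '' Icc a t))
    (hν : ∀ p q, a ≤ p → p ≤ q →
      ν (Ioc p q) = ENNReal.ofReal (runningSup b z a q - runningSup b z a p)) :
    ∀ᵐ s ∂ν, a < s → z s = runningSup b z a s := by
  refine measure_null_of_forall_nhdsGE_null fun s hs => ?_
  obtain ⟨has, hne⟩ : a < s ∧ z s ≠ runningSup b z a s := by simpa using hs
  have hzs := lt_of_le_of_ne (apply_le_runningSup b (hz s) (right_mem_Icc.2 has.le)) hne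
  obtain ⟨u, hsu, hconst⟩ := mem_nhdsGE_iff_exists_Icc_subset.1
    (eventually_runningSup_eq hz has.le (husc s has.le) hzs)
  have hflat : ν (Ioc s u) = 0 := by
    rw [hν s u has.le hsu.le, hconst (right_mem_Icc.2 hsu.le), sub_self, ENNReal.ofReal_zero]
  have hatom : ν {s} = 0 := measure_singleton_eq_zero_of_forall_exists_lt hν
    fun _ hc => exists_lt_runningSup_of_apply_lt hz has hzs hc
  refine ⟨Icc s u, Icc_mem_nhdsGE hsu, ?_⟩
  rw [← Ioc_union_left hsu.le]
  exact measure_union_null hflat hatom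

end Measure

theorem stmt_18_general (y ub : ℝ → ℝ)
    (husc : ∀ t, 0 ≤ t → UpperSemicontinuousWithinAt (fun s => y s - ub s) (Ici t) t)
    (hbdd : ∀ t, BddAbove ((fun s => y s - ub s) '' Icc 0 t))
    (h0 : y 0 ≤ ub 0) (k x : ℝ → ℝ)
    (hk : ∀ t : ℝ, k t = -sSup ((fun s => max (y s - ub s) 0) '' Set.Icc 0 t))
    (hx : ∀ t : ℝ, x t = y t + k t) :
    AntitoneOn k (Set.Ici 0) ∧ CadlagOn k ∧ k 0 = 0 ∧
    (∀ t : ℝ, 0 ≤ t → x t ≤ ub t) ∧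
    ∀ ν : Measure ℝ,
      (∀ a b : ℝ, 0 ≤ a → a ≤ b → ν (Set.Ioc a b) = ENNReal.ofReal (k a - k b)) →
      ν {0} = 0 →
      ∀ t : ℝ, 0 ≤ t → (∫ s in Set.Icc 0 t, (ub s - x s) ∂ν) = 0 := by
  obtain rfl : k = fun t => -runningSup 0 (fun s => y s - ub s) 0 t := funext hk
  have hanti := (monotoneOn_runningSup 0 hbdd).neg
  refine ⟨hanti, .of_antitoneOn hanti fun t ht =>
    (continuousWithinAt_runningSup hbdd ht (husc t ht)).neg, ?_, fun t ht => ?_, ?_⟩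
  · change -runningSup 0 _ 0 0 = 0
    rw [runningSup_self, max_eq_right (sub_nonpos.2 h0), neg_zero]
  · have := apply_le_runningSup 0 (hbdd t) (right_mem_Icc.2 ht)
    linarith [hx t]
  · intro ν hν hν0 t _
    have hreflect := ae_eq_runningSup_of_measure_Ioc (b := 0) husc hbdd
      fun p q hp hpq => (hν p q hp hpq).trans (by rw [neg_sub_neg])
    refine integral_eq_zero_of_ae ((ae_restrict_iff' measurableSet_Icc).2 ?_)
    filter_upwards [hreflect, measure_eq_zero_iff_ae_notMem.1 hν0] with s hs hs0 hst
    have := hs (lt_of_le_of_ne hst.1 (Ne.symm hs0))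
    simp only [Pi.zero_apply]
    linarith [hx s]

/-- the explicit solution of the deterministic Skorokhod problem with one
upper barrier. -/
theorem stmt_18 (y ub : ℝ → ℝ) (hy : CadlagOn y) (hub : CadlagOn ub)
    (h0 : y 0 ≤ ub 0) (k x : ℝ → ℝ)
    (hk : ∀ t : ℝ, k t = -sSup ((fun s => max (y s - ub s) 0) '' Set.Icc 0 t))
    (hx : ∀ t : ℝ, x t = y t + k t) :
    AntitoneOn k (Set.Ici 0) ∧ CadlagOn k ∧ k 0 = 0 ∧
    (∀ t : ℝ, 0 ≤ t → x t ≤ ub t) ∧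
    ∀ ν : Measure ℝ,
      (∀ a b : ℝ, 0 ≤ a → a ≤ b → ν (Set.Ioc a b) = ENNReal.ofReal (k a - k b)) →
      ν {0} = 0 →
      ∀ t : ℝ, 0 ≤ t → (∫ s in Set.Icc 0 t, (ub s - x s) ∂ν) = 0 :=
  stmt_18_general y ub (fun t ht => ((hy.sub hub).1 t ht).upperSemicontinuousWithinAt)
    (hy.sub hub).bddAbove_image_Icc h0 k x hk hx
end
end
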